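/- arXiv:2111.06299 — 2 statements merged into one kernel-verified Lean document; each statement's English description precedes it below -/
import Mathlib

section
/- Let (T, B) be a tree decomposition of a graph G, rooted at r, of depth d, and let λ be an integer with 1 ≤ λ ≤ d. Then the highway decomposition (T, B') has combinatorial diameter at most 3. -/
/-!
STATEMENT 5: Let (T, B) be a tree decomposition of a graph G, rooted at r, of depth d,
and let λ be an integer with 1 ≤ λ ≤ d. Then the highway decomposition (T, B') has
combinatorial diameter at most 3.
-/

open SimpleGraph

/-- `(T, B)` is a tree decomposition of the graph `G`. -/
structure IsTreeDecomp {V ι : Type*} (G : SimpleGraph V) (T : SimpleGraph ι)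
    (B : ι → Set V) : Prop where
  isTree : T.IsTree
  exists_bag : ∀ v : V, ∃ i, v ∈ B i
  edge_bag : ∀ ⦃u v : V⦄, G.Adj u v → ∃ i, u ∈ B i ∧ v ∈ B i
  bag_connected : ∀ (v : V) (i j : ι), v ∈ B i → v ∈ B j →
    ∀ p : T.Walk i j, p.IsPath → ∀ k ∈ p.support, v ∈ B k

/-- One simplification step: delete a redundant internal node `x` (with neighbors
`u` and `w`, in some labeling of the two neighbors, satisfying `B x ∩ B w ⊆ B u`)
from the list of nodes of a path, joining its two former neighbors. -/
def SimpStep {V ι : Type*} (B : ι → Set V) (l l' : List ι) : Prop :=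
  ∃ (l₁ l₂ : List ι) (u x w : ι),
    l = l₁ ++ u :: x :: w :: l₂ ∧ l' = l₁ ++ u :: w :: l₂ ∧
      (B x ∩ B w ⊆ B u ∨ B x ∩ B u ⊆ B w)

/-- The path `T_{s↔t}` has combinatorial length at most `n`: some simplification of
the (unique) path from `s` to `t` has at most `n` edges (i.e. at most `n + 1` nodes). -/
def CombLenLE {V ι : Type*} (T : SimpleGraph ι) (B : ι → Set V) (s t : ι) (n : ℕ) : Prop :=
  ∀ p : T.Walk s t, p.IsPath →
    ∃ l : List ι, Relation.ReflTransGen (SimpStep B) p.support l ∧ l.length ≤ n + 1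

/-- `(T, B)` has combinatorial diameter at most `n`. -/
def CombDiamLE {V ι : Type*} (T : SimpleGraph ι) (B : ι → Set V) (n : ℕ) : Prop :=
  ∀ s t : ι, CombLenLE T B s t n

def Anc5 {ι : Type*} (T : SimpleGraph ι) (r a v : ι) : Prop :=
  ∃ q : T.Walk v r, q.IsPath ∧ a ∈ q.support

theorem anc5_refl {ι : Type*} {T : SimpleGraph ι} (hT : T.IsTree) (r v : ι) : Anc5 T r v v := by
  obtain ⟨q, hq, -⟩ := hT.existsUnique_path v r
  exact ⟨q, hq, q.start_mem_support⟩

theorem anc5_trans {ι : Type*} {T : SimpleGraph ι} (hT : T.IsTree) {r a b v : ι}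
    (h1 : Anc5 T r b a) (h2 : Anc5 T r a v) : Anc5 T r b v := by
  classical
  obtain ⟨q, hq, ha⟩ := h2
  obtain ⟨q', hq', hb⟩ := h1
  have : q' = q.dropUntil a ha := (hT.existsUnique_path a r).unique hq' (hq.dropUntil ha)
  subst this
  exact ⟨q, hq, q.support_dropUntil_subset_support ha hb⟩

theorem anc5_lvl {ι : Type*} {T : SimpleGraph ι} {r : ι} {lvl : ι → ℕ}
    (hlvl : ∀ (v : ι) (p : T.Walk v r), p.IsPath → p.length = lvl v) {a v : ι}
    (h : Anc5 T r a v) : lvl a ≤ lvl v ∧ (lvl a = lvl v → a = v) := by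
  classical
  obtain ⟨q, hq, ha⟩ := h
  have h1 := hlvl _ _ (hq.dropUntil ha)
  have h2 := hlvl _ _ hq
  have h3 := congrArg Walk.length (q.take_spec ha)
  rw [Walk.length_append] at h3
  refine ⟨by omega, fun h => ?_⟩
  have : (q.takeUntil a ha).length = 0 := by omega
  exact (Walk.eq_of_length_eq_zero this).symm

theorem anc5_split {ι : Type*} [DecidableEq ι] {T : SimpleGraph ι} {r a b v : ι} (q : T.Walk v r)
    (hq : q.IsPath) (ha : a ∈ q.support) (hb : b ∈ q.support) :
    a ∈ (q.takeUntil b hb).support ∨ Anc5 T r a b := by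
  rw [← q.take_spec hb, Walk.mem_support_append_iff] at ha
  exact ha.imp id fun h => ⟨_, hq.dropUntil hb, h⟩

theorem anc5_take {ι : Type*} [DecidableEq ι] {T : SimpleGraph ι} {r a b v : ι} (q : T.Walk v r)
    (hq : q.IsPath) (hb : b ∈ q.support) (ha : a ∈ (q.takeUntil b hb).support) :
    Anc5 T r b a := by
  have h : q = ((q.takeUntil b hb).takeUntil a ha).append
      (((q.takeUntil b hb).dropUntil a ha).append (q.dropUntil b hb)) := by
    rw [Walk.append_assoc, Walk.take_spec, Walk.take_spec]
  refine ⟨((q.takeUntil b hb).dropUntil a ha).append (q.dropUntil b hb), ?_, ?_⟩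
  · rw [h] at hq
    exact hq.of_append_right
  · rw [Walk.mem_support_append_iff]
    exact Or.inl (Walk.end_mem_support _)

theorem anc5_total {ι : Type*} {T : SimpleGraph ι} (hT : T.IsTree) {r : ι} {lvl : ι → ℕ}
    (hlvl : ∀ (v : ι) (p : T.Walk v r), p.IsPath → p.length = lvl v) {a b v : ι}
    (h1 : Anc5 T r a v) (h2 : Anc5 T r b v) (h : lvl a ≤ lvl b) : Anc5 T r a b := by
  classical
  obtain ⟨q, hq, ha⟩ := h1
  obtain ⟨q', hq', hb⟩ := h2
  obtain rfl : q' = q := (hT.existsUnique_path v r).unique hq' hq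
  rcases anc5_split q' hq ha hb with h' | h'
  · have h3 := anc5_take q' hq hb h'
    have h4 := anc5_lvl hlvl h3
    obtain rfl := h4.2 (by omega)
    exact h3
  · exact h'

theorem anc5_conn {V ι : Type*} {G : SimpleGraph V} {T : SimpleGraph ι} {B : ι → Set V}
    (hTD : IsTreeDecomp G T B) {r : ι} {lvl : ι → ℕ}
    (hlvl : ∀ (v : ι) (p : T.Walk v r), p.IsPath → p.length = lvl v) {a b v : ι}
    (h1 : Anc5 T r b a) (h2 : Anc5 T r a v) {e : V} (hb : e ∈ B b) (hv : e ∈ B v) : e ∈ B a := by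
  classical
  obtain ⟨q, hq, hbq⟩ := anc5_trans hTD.isTree h1 h2
  obtain ⟨q', hq', ha⟩ := h2
  obtain rfl : q' = q := (hTD.isTree.existsUnique_path v r).unique hq' hq
  rcases anc5_split q' hq ha hbq with h' | h'
  · exact hTD.bag_connected e v b hv hb _ (hq.takeUntil hbq) a h'
  · have h3 := anc5_lvl hlvl h'
    have h4 := anc5_lvl hlvl h1
    obtain rfl := h3.2 (by omega)
    exact hb

theorem pairwise5 {ι : Type*} {T : SimpleGraph ι} {r : ι} {lvl : ι → ℕ}
    (hlvl : ∀ (v : ι) (p : T.Walk v r), p.IsPath → p.length = lvl v) {v : ι} (p : T.Walk v r)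
    (hp : p.IsPath) : p.support.Pairwise (fun a b => lvl b < lvl a) := by
  induction p with
  | nil => simp
  | cons h p ih =>
    have h0 := hlvl _ _ hp
    rw [Walk.cons_isPath_iff] at hp
    rw [Walk.support_cons, List.pairwise_cons]
    refine ⟨fun b hb => ?_, ih hlvl hp.1⟩
    have h1 := hlvl _ _ hp.1
    have h2 := anc5_lvl hlvl ⟨_, hp.1, hb⟩
    rw [Walk.length_cons] at h0
    omega

def Par5 {ι : Type*} (T : SimpleGraph ι) (r : ι) (lvl : ι → ℕ) (v u : ι) : Prop :=
  Anc5 T r u v ∧ lvl v = lvl u + 1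

theorem adj5 {ι : Type*} {T : SimpleGraph ι} (hT : T.IsTree) {r : ι} {lvl : ι → ℕ}
    (hlvl : ∀ (v : ι) (p : T.Walk v r), p.IsPath → p.length = lvl v) {u v : ι}
    (h : T.Adj u v) : Par5 T r lvl u v ∨ Par5 T r lvl v u := by
  classical
  obtain ⟨q, hq, -⟩ := hT.existsUnique_path v r
  by_cases hu : u ∈ q.support
  · right
    refine ⟨⟨q, hq, hu⟩, ?_⟩
    have h1 := hlvl _ _ (hq.dropUntil hu)
    have h2 := hlvl _ _ hq
    have h3 := congrArg Walk.length (q.take_spec hu)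
    rw [Walk.length_append] at h3
    have h4 : q.takeUntil u hu = Walk.cons h.symm Walk.nil := by
      refine (hT.existsUnique_path v u).unique (hq.takeUntil hu) ?_
      rw [Walk.cons_isPath_iff]
      simp [h.symm.ne]
    rw [h4] at h3
    simp only [Walk.length_cons, Walk.length_nil] at h3
    omega
  · left
    have hp : (Walk.cons h q).IsPath := by
      rw [Walk.cons_isPath_iff]; exact ⟨hq, hu⟩
    refine ⟨⟨_, hp, by simp⟩, ?_⟩
    rw [← hlvl _ _ hp, ← hlvl _ _ hq, Walk.length_cons]

theorem par5_unique {ι : Type*} {T : SimpleGraph ι} (hT : T.IsTree) {r : ι} {lvl : ι → ℕ}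
    (hlvl : ∀ (v : ι) (p : T.Walk v r), p.IsPath → p.length = lvl v) {u v w : ι}
    (h1 : Par5 T r lvl v u) (h2 : Par5 T r lvl v w) : u = w := by
  have e : lvl u = lvl w := by have := h1.2; have := h2.2; omega
  exact (anc5_lvl hlvl (anc5_total hT hlvl h1.1 h2.1 e.le)).2 e

theorem decomp5 {ι : Type*} {T : SimpleGraph ι} (hT : T.IsTree) {r : ι} {lvl : ι → ℕ}
    (hlvl : ∀ (v : ι) (p : T.Walk v r), p.IsPath → p.length = lvl v) {s t : ι}
    (p : T.Walk s t) (hp : p.IsPath) :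
    ∃ (U : List ι) (m : ι) (D : List ι), p.support = U ++ m :: D ∧
      (U ++ [m]).IsChain (Par5 T r lvl) ∧ (m :: D).IsChain (fun a b => Par5 T r lvl b a) := by
  induction p with
  | @nil u => exact ⟨[], u, [], by simp, by simp, by simp⟩
  | @cons u v w h p ih =>
    rw [Walk.cons_isPath_iff] at hp
    obtain ⟨U, m, D, h1, h2, h3⟩ := ih hp.1
    rcases adj5 hT hlvl h with h4 | h4
    · refine ⟨u :: U, m, D, by simp [h1], ?_, h3⟩
      have hh : p.support = v :: p.support.tail := p.cons_tail_support.symm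
      rw [h1] at hh
      cases U with
      | nil =>
        simp only [List.nil_append, List.cons.injEq] at hh
        simpa [hh.1] using h4
      | cons x U =>
        simp only [List.cons_append, List.cons.injEq] at hh
        obtain ⟨rfl, -⟩ := hh
        simp only [List.cons_append, List.isChain_cons_cons] at h2 ⊢
        exact ⟨h4, h2⟩
    · refine ⟨[], u, p.support, by simp, by simp, ?_⟩
      have hh : p.support = v :: p.support.tail := p.cons_tail_support.symm
      rw [h1] at hh
      cases U with
      | nil =>
        simp only [List.nil_append, List.cons.injEq] at hh
        obtain ⟨rfl, -⟩ := hh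
        rw [h1, List.nil_append, List.isChain_cons_cons]
        exact ⟨h4, h3⟩
      | cons x U =>
        exfalso
        simp only [List.cons_append, List.cons.injEq] at hh
        obtain ⟨rfl, -⟩ := hh
        apply hp.2
        rw [h1]
        cases U with
        | nil =>
          simp only [List.cons_append, List.nil_append, List.isChain_cons_cons] at h2
          simp [par5_unique hT hlvl h4 h2.1]
        | cons y U =>
          simp only [List.cons_append, List.isChain_cons_cons] at h2
          simp [par5_unique hT hlvl h4 h2.1]

theorem step5_ctx {V ι : Type*} {B : ι → Set V} {l l' : List ι} (a b : List ι)
    (h : Relation.ReflTransGen (SimpStep B) l l') :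
    Relation.ReflTransGen (SimpStep B) (a ++ l ++ b) (a ++ l' ++ b) := by
  refine Relation.ReflTransGen.lift (fun l => a ++ l ++ b) ?_ _ _ h
  rintro _ _ ⟨l₁, l₂, u, x, w, rfl, rfl, h⟩
  exact ⟨a ++ l₁, l₂ ++ b, u, x, w, by simp, by simp, h⟩

theorem step5_rev {V ι : Type*} {B : ι → Set V} {l l' : List ι}
    (h : Relation.ReflTransGen (SimpStep B) l l') :
    Relation.ReflTransGen (SimpStep B) l.reverse l'.reverse := by
  refine Relation.ReflTransGen.lift List.reverse ?_ _ _ h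
  rintro _ _ ⟨l₁, l₂, u, x, w, rfl, rfl, h⟩
  exact ⟨l₂.reverse, l₁.reverse, w, x, u, by simp, by simp, h.symm⟩

/-- `w` is an ancestor of `v` with no synchronization node strictly between. -/
def Ch5 {ι : Type*} (T : SimpleGraph ι) (r : ι) (lvl : ι → ℕ) (lam : ℕ) (w v : ι) : Prop :=
  Anc5 T r w v ∧ ∀ y, Anc5 T r y v → lvl w < lvl y → lvl y < lvl v → ¬ lam ∣ lvl y

theorem up5 {V ι : Type*} {G : SimpleGraph V} {T : SimpleGraph ι} {B B' : ι → Set V}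
    (hTD : IsTreeDecomp G T B) {r : ι} {lvl : ι → ℕ}
    (hlvl : ∀ (v : ι) (p : T.Walk v r), p.IsPath → p.length = lvl v) (lam : ℕ)
    (hm : ∀ v e, e ∈ B' v ↔ ∃ w, Anc5 T r w v ∧ (lam ∣ lvl w ∨ Ch5 T r lvl lam w v) ∧ e ∈ B w)
    (s : ι) (L : List ι) : ∀ x w z, Anc5 T r x s → Ch5 T r lvl lam w x → lvl w < lvl x →
      (w :: L).IsChain (Par5 T r lvl) → (w :: L).getLast? = some z →
      Relation.ReflTransGen (SimpStep B') (s :: x :: w :: L) [s, z] ∨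
      ∃ a, B' z ⊆ B' a ∧ Relation.ReflTransGen (SimpStep B') (s :: x :: w :: L) [s, a, z] := by
  have hT := hTD.isTree
  have F1 : ∀ x w, Anc5 T r x s → Ch5 T r lvl lam w x → lvl w < lvl x → lam ∣ lvl w →
      B' x ∩ B' w ⊆ B' s := by
    rintro x w hx hw hlt hd e ⟨h1, h2⟩
    rw [hm] at h1 h2 ⊢
    obtain ⟨z, hz, hz', hez⟩ := h1
    obtain ⟨y, hy, hy', hey⟩ := h2
    rcases hz' with hz' | hz'
    · exact ⟨z, anc5_trans hT hz hx, Or.inl hz', hez⟩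
    rcases hy' with hy' | hy'
    · exact ⟨y, anc5_trans hT hy (anc5_trans hT hw.1 hx), Or.inl hy', hey⟩
    have hwz : lvl w ≤ lvl z := by
      by_contra hc
      exact hz'.2 w hw.1 (by omega) hlt hd
    exact ⟨w, anc5_trans hT hw.1 hx, Or.inl hd,
      anc5_conn hTD hlvl hy (anc5_total hT hlvl hw.1 hz hwz) hey hez⟩
  have F2 : ∀ x w, Ch5 T r lvl lam w x → ¬ lam ∣ lvl w → B' w ⊆ B' x := by
    intro x w hw hd e he
    rw [hm] at he ⊢
    obtain ⟨y, hy, hy', hey⟩ := he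
    refine ⟨y, anc5_trans hT hy hw.1, ?_, hey⟩
    rcases hy' with hy' | hy'
    · exact Or.inl hy'
    refine Or.inr ⟨anc5_trans hT hy hw.1, fun z hz h1 h2 h3 => ?_⟩
    rcases lt_trichotomy (lvl z) (lvl w) with h | h | h
    · exact hy'.2 z (anc5_total hT hlvl hz hw.1 h.le) h1 h h3
    · exact hd (h ▸ h3)
    · exact hw.2 z hz h h2 h3
  induction L with
  | nil =>
    intro x w z hx hw hlt _ hz
    simp only [List.getLast?_singleton, Option.some.injEq] at hz
    subst hz
    by_cases hd : lam ∣ lvl w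
    · exact Or.inl (.single ⟨[], [], s, x, w, rfl, rfl, Or.inl (F1 x w hx hw hlt hd)⟩)
    · exact Or.inr ⟨x, F2 x w hw hd, .refl⟩
  | cons w' L ih =>
    intro x w z hx hw hlt hc hz
    rw [List.isChain_cons_cons] at hc
    rw [List.getLast?_cons_cons] at hz
    have hp := hc.1.2
    by_cases hd : lam ∣ lvl w
    · have st : SimpStep B' (s :: x :: w :: w' :: L) (s :: w :: w' :: L) :=
        ⟨[], w' :: L, s, x, w, rfl, rfl, Or.inl (F1 x w hx hw hlt hd)⟩
      have := ih w w' z (anc5_trans hT hw.1 hx) ⟨hc.1.1, fun y _ _ _ => by omega⟩ (by omega) hc.2 hz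
      exact this.imp (fun h => .head st h) fun ⟨a, h1, h⟩ => ⟨a, h1, .head st h⟩
    · have st : SimpStep B' (s :: x :: w :: w' :: L) (s :: x :: w' :: L) :=
        ⟨[s], L, x, w, w', rfl, rfl, Or.inl fun e he => F2 x w hw hd he.1⟩
      have := ih x w' z hx ⟨anc5_trans hT hc.1.1 hw.1, fun y hy h1 h2 h3 => ?_⟩ (by omega) hc.2 hz
      · exact this.imp (fun h => .head st h) fun ⟨a, h1, h⟩ => ⟨a, h1, .head st h⟩
      · rcases Nat.lt_or_ge (lvl w) (lvl y) with h | h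
        · exact hw.2 y hy h h2 h3
        · exact hd ((show lvl y = lvl w by omega) ▸ h3)

/-- Reduction of an upward path ending in `m`. -/
theorem up5' {V ι : Type*} {G : SimpleGraph V} {T : SimpleGraph ι} {B B' : ι → Set V}
    (hTD : IsTreeDecomp G T B) {r : ι} {lvl : ι → ℕ}
    (hlvl : ∀ (v : ι) (p : T.Walk v r), p.IsPath → p.length = lvl v) (lam : ℕ)
    (hm : ∀ v e, e ∈ B' v ↔ ∃ w, Anc5 T r w v ∧ (lam ∣ lvl w ∨ Ch5 T r lvl lam w v) ∧ e ∈ B w)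
    (U : List ι) (m : ι) (hc : (U ++ [m]).IsChain (Par5 T r lvl)) :
    ∃ l, Relation.ReflTransGen (SimpStep B') (U ++ [m]) (l ++ [m]) ∧
      (l.length ≤ 1 ∨ ∃ s a, l = [s, a] ∧ B' m ⊆ B' a) := by
  match U, hc with
  | [], _ => exact ⟨[], .refl, by simp⟩
  | [s], _ => exact ⟨[s], .refl, by simp⟩
  | s :: x :: U, hc =>
    obtain ⟨w, L, hL⟩ : ∃ w L, U ++ [m] = w :: L := by
      cases U with
      | nil => exact ⟨m, [], rfl⟩
      | cons w U => exact ⟨w, U ++ [m], rfl⟩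
    simp only [List.cons_append, hL, List.isChain_cons_cons] at hc ⊢
    have hl : (w :: L).getLast? = some m := by rw [← hL]; simp
    have hp := hc.2.1.2
    rcases up5 hTD hlvl lam hm s L x w m hc.1.1 ⟨hc.2.1.1, fun y _ _ _ => by omega⟩ (by omega)
      hc.2.2 hl with h | ⟨a, ha, h⟩
    · exact ⟨[s], h, by simp⟩
    · exact ⟨[s, a], h, Or.inr ⟨s, a, rfl, ha⟩⟩

theorem stmt5 {V ι : Type*} [Fintype V] [Fintype ι]
    (G : SimpleGraph V) (T : SimpleGraph ι) (B : ι → Set V)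
    (hTD : IsTreeDecomp G T B)
    (r : ι)
    -- the level of a node: the number of edges on the (unique) path to the root
    (lvl : ι → ℕ)
    (hlvl : ∀ (v : ι) (p : T.Walk v r), p.IsPath → p.length = lvl v)
    -- the depth of the rooted decomposition
    (d : ℕ) (hd : ∀ v, lvl v ≤ d) (hde : ∃ v, lvl v = d)
    (lam : ℕ) (hlam1 : 1 ≤ lam) (hlamd : lam ≤ d)
    -- `syn v` is the synchronization ancestor of `v ≠ r`: the first node after `v`
    -- on the path from `v` to `r` whose level is divisible by `lam`
    (syn : ι → ι)
    (hsyn : ∀ v, v ≠ r → ∀ p : T.Walk v r, p.IsPath →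
      ∃ l₁ l₂ : List ι, p.support = v :: (l₁ ++ syn v :: l₂) ∧
        lam ∣ lvl (syn v) ∧ ∀ w ∈ l₁, ¬ lam ∣ lvl w)
    -- the highway decomposition
    (B' : ι → Set V)
    (hB'r : B' r = B r)
    (hB' : ∀ v, v ≠ r → ∀ pr : T.Walk v r, pr.IsPath → ∀ ps : T.Walk v (syn v), ps.IsPath →
      B' v = ⋃ w ∈ {w : ι | w ∈ pr.support ∧ (w ∈ ps.support ∨ lam ∣ lvl w)}, B w) :
    CombDiamLE T B' 3 := by
  classical
  have hT := hTD.isTree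
  have hr0 : lvl r = 0 := (hlvl r Walk.nil (by simp)).symm
  have hm : ∀ v e, e ∈ B' v ↔
      ∃ w, Anc5 T r w v ∧ (lam ∣ lvl w ∨ Ch5 T r lvl lam w v) ∧ e ∈ B w := by
    intro v e
    by_cases hv : v = r
    · subst hv
      rw [hB'r]
      constructor
      · intro h
        exact ⟨v, anc5_refl hT v v, Or.inl (by simp [hr0]), h⟩
      · rintro ⟨w, hw, -, h⟩
        have := anc5_lvl hlvl hw
        rwa [this.2 (by omega)] at h
    · obtain ⟨pr, hpr, hu⟩ := hT.existsUnique_path v r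
      obtain ⟨l₁, l₂, h1, h2, h3⟩ := hsyn v hv pr hpr
      have hpw := pairwise5 hlvl pr hpr
      have hs : syn v ∈ pr.support := by rw [h1]; simp
      have hA : ∀ w, Anc5 T r w v ↔ w ∈ pr.support := by
        intro w
        constructor
        · rintro ⟨q, hq, hw⟩
          rwa [hu q hq] at hw
        · exact fun h => ⟨pr, hpr, h⟩
      rw [hB' v hv pr hpr _ (hpr.takeUntil hs)]
      rw [h1, List.pairwise_cons, List.pairwise_append, List.pairwise_cons] at hpw
      obtain ⟨g1, -, ⟨g2, -⟩, -⟩ := hpw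
      have hsv : lvl (syn v) < lvl v := g1 _ (by simp)
      have key : ∀ w ∈ pr.support, (w ∈ (pr.takeUntil (syn v) hs).support ↔
          Ch5 T r lvl lam w v) := by
        intro w hw
        constructor
        · intro hw'
          have h5 := (anc5_lvl hlvl (anc5_take pr hpr hs hw')).1
          refine ⟨(hA w).2 hw, fun y hy hy1 hy2 hy3 => ?_⟩
          rw [hA, h1] at hy
          simp only [List.mem_cons, List.mem_append] at hy
          rcases hy with rfl | hy | rfl | hy
          · omega
          · exact h3 y hy hy3
          · omega
          · have := g2 y hy
            omega
        · rintro ⟨-, hw'⟩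
          rcases anc5_split pr hpr hw hs with h | h
          · exact h
          · have h5 := anc5_lvl hlvl h
            by_cases h6 : lvl w = lvl (syn v)
            · rw [h5.2 h6]; exact Walk.end_mem_support _
            · exact absurd h2 (hw' (syn v) ((hA _).2 hs) (by omega) hsv)
      simp only [Set.mem_iUnion, Set.mem_setOf_eq, exists_prop, hA]
      constructor
      · rintro ⟨w, ⟨hw, hw'⟩, he⟩
        rw [key w hw] at hw'
        exact ⟨w, hw, hw'.symm, he⟩
      · rintro ⟨w, hw, hw', he⟩
        rw [← key w hw] at hw'
        exact ⟨w, ⟨hw, hw'.symm⟩, he⟩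
  intro s t p hp
  obtain ⟨U, m, D, h1, h2, h3⟩ := decomp5 hT hlvl p hp
  obtain ⟨l, hl, hl'⟩ := up5' hTD hlvl lam hm U m h2
  have h4 : (D.reverse ++ [m]).IsChain (Par5 T r lvl) := by
    rw [← List.reverse_cons, List.isChain_reverse]
    exact h3
  obtain ⟨k, hk, hk'⟩ := up5' hTD hlvl lam hm D.reverse m h4
  have hk2 := step5_rev hk
  simp only [List.reverse_append, List.reverse_reverse, List.reverse_singleton] at hk2
  have e1 := step5_ctx [] D hl
  have e2 := step5_ctx l [] hk2
  simp only [List.nil_append, List.append_nil, List.append_assoc, List.singleton_append] at e1 e2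
  have e3 := e1.trans e2
  rw [← h1] at e3
  have small : l.length + k.length ≤ 3 →
      ∃ l : List ι, Relation.ReflTransGen (SimpStep B') p.support l ∧ l.length ≤ 3 + 1 := by
    intro h
    refine ⟨_, e3, ?_⟩
    simp only [List.length_append, List.length_cons, List.length_reverse]
    omega
  rcases hl' with hl' | ⟨s', a, rfl, ha⟩
  · rcases hk' with hk' | ⟨_, _, rfl, _⟩
    · exact small (by omega)
    · exact small (by simp; omega)
  · rcases hk' with hk' | ⟨t', b, rfl, hb⟩
    · exact small (by simp; omega)
    · refine ⟨[s', a, b, t'], e3.tail ⟨[s'], [t'], a, m, b, by simp, by simp, Or.inl ?_⟩, by simp⟩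
      exact fun e he => ha he.1
end

section
/- Under the layered chain setup, suppose additionally that S_ℓ = {t_0, t_1} with Pr[X_ℓ = t_0] = Pr[X_ℓ = t_1] = 1/2, and that A(t_1) < 0. Define the edge set C to consist of all triples (i, u, v) with u ∈ S_i, v ∈ S_{i+1}, and either w(u, v) = 0 or (Pr[X_i = u] > 0, Pr[X_{i+1} = v] > 0 and |A(u) − A(v)| > 1/(2ℓ)). Then: (a) for every sequence v_0 = s_0, v_1 ∈ S_1, …, v_{ℓ−1} ∈ S_{ℓ−1}, v_ℓ = t_1, some consecutive pair (i, v_i, v_{i+1}) belongs to C (so C is an s_0–t_1 cut); and (b) the total weight of C satisfies Σ_{(i,u,v) ∈ C} w(u, v) ≤ 8 ℓ² · Pr[X_0 = s_0 ∧ X_ℓ = t_1]. -/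
/-!
STATEMENT 12: Under the layered chain setup, with S_ℓ = {t_0, t_1},
Pr[X_ℓ = t_0] = Pr[X_ℓ = t_1] = 1/2 and A(t_1) < 0, the set C of edges that either
have zero weight or have A-gap greater than 1/(2ℓ) is an s_0–t_1 cut, and its total
weight is at most 8ℓ² · Pr[X_0 = s_0 ∧ X_ℓ = t_1].
-/

open Classical in
/-- Probability of the event `A` under the finitely-supported distribution `p`. -/
noncomputable def prE {Ω : Type*} [Fintype Ω] (p : Ω → ℝ) (A : Ω → Prop) : ℝ :=
  ∑ ω, if A ω then p ω else 0

/-- Expectation of `f` under the finitely-supported distribution `p`. -/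
noncomputable def expE {Ω : Type*} [Fintype Ω] (p : Ω → ℝ) (f : Ω → ℝ) : ℝ :=
  ∑ ω, p ω * f ω

/-- Variance of `f` under the finitely-supported distribution `p`. -/
noncomputable def varE {Ω : Type*} [Fintype Ω] (p : Ω → ℝ) (f : Ω → ℝ) : ℝ :=
  expE p fun ω => (f ω - expE p f) ^ 2

/-- Conditional probability `Pr[A | B]` under `p`. -/
noncomputable def cprE {Ω : Type*} [Fintype Ω] (p : Ω → ℝ) (A B : Ω → Prop) : ℝ :=
  prE p (fun ω => A ω ∧ B ω) / prE p B

/-- `Aval p A0 Xi v = Pr[A0 | Xi = v] − 1/2`. -/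
noncomputable def Aval {Ω σ : Type*} [Fintype Ω] (p : Ω → ℝ) (A0 : Ω → Prop)
    (Xi : Ω → σ) (v : σ) : ℝ :=
  cprE p A0 (fun ω => Xi ω = v) - 1 / 2


lemma prE_nonneg_aux {Ω : Type*} [Fintype Ω] (p : Ω → ℝ) (hp : ∀ ω, 0 ≤ p ω) (A : Ω → Prop) :
    0 ≤ prE p A := by
  classical
  unfold prE
  exact Finset.sum_nonneg fun ω _ => by split_ifs <;> simp [hp]

lemma prE_mono_aux {Ω : Type*} [Fintype Ω] (p : Ω → ℝ) (hp : ∀ ω, 0 ≤ p ω) (A B : Ω → Prop)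
    (h : ∀ ω, A ω → B ω) : prE p A ≤ prE p B := by
  classical
  unfold prE
  refine Finset.sum_le_sum fun ω _ => ?_
  by_cases hA : A ω
  · simp [hA, h ω hA]
  · simp only [hA, if_false]
    split_ifs <;> simp [hp]

lemma le_prE_aux {Ω : Type*} [Fintype Ω] (p : Ω → ℝ) (hp : ∀ ω, 0 ≤ p ω) (A : Ω → Prop)
    (ω : Ω) (h : A ω) : p ω ≤ prE p A := by
  classical
  unfold prE
  have := Finset.single_le_sum (f := fun ω => if A ω then p ω else 0)
    (fun ω _ => by split_ifs <;> simp [hp]) (Finset.mem_univ ω)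
  simpa [h] using this

open Classical in
lemma fib1_aux {Ω σ : Type*} [Fintype Ω] [Fintype σ] (p : Ω → ℝ) (A : Ω → Prop) (Y : Ω → σ)
    (g : σ → ℝ) :
    ∑ v, g v * prE p (fun ω => A ω ∧ Y ω = v) = ∑ ω, p ω * g (Y ω) * (if A ω then 1 else 0) := by
  unfold prE
  simp_rw [Finset.mul_sum]
  rw [Finset.sum_comm]
  refine Finset.sum_congr rfl fun ω _ => ?_
  rw [Finset.sum_eq_single (Y ω)]
  · by_cases h : A ω <;> simp [h, mul_comm]
  · intro b _ hb
    simp [Ne.symm hb]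
  · simp

open Classical in
lemma fib2_aux {Ω σ τ : Type*} [Fintype Ω] [Fintype σ] [Fintype τ] (p : Ω → ℝ) (A : Ω → Prop)
    (Y : Ω → σ) (Z : Ω → τ) (g : σ → τ → ℝ) :
    ∑ u, ∑ v, g u v * prE p (fun ω => A ω ∧ Y ω = u ∧ Z ω = v)
      = ∑ ω, p ω * g (Y ω) (Z ω) * (if A ω then 1 else 0) := by
  have := fib1_aux p A (fun ω => (Y ω, Z ω)) (fun x => g x.1 x.2)
  simp only [Fintype.sum_prod_type, Prod.mk.injEq] at this
  exact this

lemma cpr_mul_aux {Ω : Type*} [Fintype Ω] (p : Ω → ℝ) (hp : ∀ ω, 0 ≤ p ω) (A B : Ω → Prop) :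
    prE p (fun ω => A ω ∧ B ω) = cprE p A B * prE p B := by
  unfold cprE
  by_cases h : prE p B = 0
  · rw [h, mul_zero]
    exact le_antisymm (h ▸ prE_mono_aux p hp _ _ fun ω h => h.2) (prE_nonneg_aux p hp _)
  · field_simp

lemma proj_aux {Ω σ : Type*} [Fintype Ω] [Fintype σ] (p : Ω → ℝ) (hp : ∀ ω, 0 ≤ p ω)
    (A : Ω → Prop) (Y : Ω → σ) (g : σ → ℝ) :
    ∑ v, g v * prE p (fun ω => A ω ∧ Y ω = v)
      = ∑ ω, p ω * (g (Y ω) * (Aval p A Y (Y ω) + 1 / 2)) := by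
  classical
  have := fib1_aux p (fun _ => True) Y (fun v => g v * (Aval p A Y v + 1 / 2))
  simp only [true_and, if_true, mul_one] at this
  rw [← this]
  refine Finset.sum_congr rfl fun v _ => ?_
  rw [cpr_mul_aux p hp A]
  unfold Aval
  ring

lemma step_aux {Ω σ τ : Type*} [Fintype Ω] [Fintype σ] [Fintype τ] (p : Ω → ℝ)
    (hp : ∀ ω, 0 ≤ p ω) (A : Ω → Prop) (Y : Ω → σ) (Z : Ω → τ)
    (hci : ∀ b c, prE p (fun ω => A ω ∧ Z ω = b ∧ Y ω = c) * prE p (fun ω => Y ω = c)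
      = prE p (fun ω => A ω ∧ Y ω = c) * prE p (fun ω => Z ω = b ∧ Y ω = c)) :
    ∑ ω, p ω * (Aval p A Y (Y ω) - Aval p A Z (Z ω)) ^ 2
      = ∑ ω, p ω * Aval p A Y (Y ω) ^ 2 - ∑ ω, p ω * Aval p A Z (Z ω) ^ 2 := by
  classical
  have h1 := proj_aux p hp A Z (Aval p A Z)
  rw [fib1_aux] at h1
  have h2 := fib2_aux p A Z Y (fun b _ => Aval p A Z b)
  have h3 := fib2_aux p (fun _ => True) Z Y
    (fun b c => Aval p A Z b * (Aval p A Y c + 1 / 2))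
  simp only [true_and, if_true, mul_one] at h3
  have h4 : ∑ u, ∑ v, Aval p A Z u * prE p (fun ω => A ω ∧ Z ω = u ∧ Y ω = v)
      = ∑ u, ∑ v, Aval p A Z u * (Aval p A Y v + 1 / 2) * prE p (fun ω => Z ω = u ∧ Y ω = v) := by
    refine Finset.sum_congr rfl fun b _ => Finset.sum_congr rfl fun c _ => ?_
    rw [mul_assoc]
    congr 1
    have hc := hci b c
    by_cases h : prE p (fun ω => Y ω = c) = 0
    · have e1 : prE p (fun ω => A ω ∧ Z ω = b ∧ Y ω = c) = 0 :=
        le_antisymm (h ▸ prE_mono_aux p hp _ _ fun ω h => h.2.2) (prE_nonneg_aux p hp _)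
      have e2 : prE p (fun ω => Z ω = b ∧ Y ω = c) = 0 :=
        le_antisymm (h ▸ prE_mono_aux p hp _ _ fun ω h => h.2) (prE_nonneg_aux p hp _)
      rw [e1, e2, mul_zero]
    · unfold Aval cprE
      field_simp
      linarith
  have h5 : ∑ ω, p ω * (Aval p A Z (Z ω) * (Aval p A Z (Z ω) + 1 / 2))
      = ∑ ω, p ω * (Aval p A Z (Z ω) * (Aval p A Y (Y ω) + 1 / 2)) := by
    rw [← h1, ← h3, ← h4, ← h2]
  have h6 : ∑ ω, p ω * (Aval p A Y (Y ω) - Aval p A Z (Z ω)) ^ 2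
      = ∑ ω, p ω * Aval p A Y (Y ω) ^ 2 - ∑ ω, p ω * Aval p A Z (Z ω) ^ 2
       + 2 * (∑ ω, p ω * (Aval p A Z (Z ω) * (Aval p A Z (Z ω) + 1 / 2))
      - ∑ ω, p ω * (Aval p A Z (Z ω) * (Aval p A Y (Y ω) + 1 / 2))) := by
    simp only [← Finset.sum_sub_distrib, Finset.mul_sum, ← Finset.sum_add_distrib]
    exact Finset.sum_congr rfl fun ω _ => by ring
  rw [h6, h5]
  ring

open Classical in
theorem stmt12 {Ω : Type*} [Fintype Ω] (ℓ : ℕ) (hℓ : 1 ≤ ℓ)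
    (S : ℕ → Type*) [∀ i, Fintype (S i)]
    -- a finite probability space
    (p : Ω → ℝ) (hp : ∀ ω, 0 ≤ p ω) (hsum : ∑ ω, p ω = 1)
    (X : ∀ i, Ω → S i)
    -- X_0 and X_{i+1} are conditionally independent given X_i
    (hci : ∀ i < ℓ, ∀ (a : S 0) (b : S (i + 1)) (c : S i),
      prE p (fun ω => X 0 ω = a ∧ X (i + 1) ω = b ∧ X i ω = c)
          * prE p (fun ω => X i ω = c)
        = prE p (fun ω => X 0 ω = a ∧ X i ω = c)
          * prE p (fun ω => X (i + 1) ω = b ∧ X i ω = c))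
    (s0 s1 : S 0) (hs : s0 ≠ s1) (hX0 : ∀ ω, X 0 ω = s0 ∨ X 0 ω = s1)
    (h0 : prE p (fun ω => X 0 ω = s0) = 1 / 2)
    (h1 : prE p (fun ω => X 0 ω = s1) = 1 / 2)
    -- S_ℓ = {t_0, t_1} with Pr[X_ℓ = t_0] = Pr[X_ℓ = t_1] = 1/2
    (t0 t1 : S ℓ) (ht : t0 ≠ t1) (hXl : ∀ ω, X ℓ ω = t0 ∨ X ℓ ω = t1)
    (hl0 : prE p (fun ω => X ℓ ω = t0) = 1 / 2)
    (hl1 : prE p (fun ω => X ℓ ω = t1) = 1 / 2)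
    -- A(t_1) < 0
    (hAt1 : Aval p (fun ω' => X 0 ω' = s0) (X ℓ) t1 < 0)
    -- the edge set C
    (C : ∀ i : ℕ, S i → S (i + 1) → Prop)
    (hC : ∀ (i : ℕ) (u : S i) (v : S (i + 1)),
      C i u v ↔ prE p (fun ω => X i ω = u ∧ X (i + 1) ω = v) = 0 ∨
        (0 < prE p (fun ω => X i ω = u) ∧ 0 < prE p (fun ω => X (i + 1) ω = v) ∧
          1 / (2 * (ℓ : ℝ)) < |Aval p (fun ω' => X 0 ω' = s0) (X i) u
            - Aval p (fun ω' => X 0 ω' = s0) (X (i + 1)) v|)) :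
    -- (a) C is an s_0–t_1 cut
    (∀ v : ∀ i, S i, v 0 = s0 → v ℓ = t1 → ∃ i < ℓ, C i (v i) (v (i + 1)))
    -- (b) the total weight of C is at most 8ℓ²·Pr[X_0 = s_0 ∧ X_ℓ = t_1]
    ∧ (∑ i ∈ Finset.range ℓ, ∑ u : S i, ∑ v : S (i + 1),
          (if C i u v then prE p (fun ω => X i ω = u ∧ X (i + 1) ω = v) else 0))
        ≤ 8 * (ℓ : ℝ) ^ 2 * prE p (fun ω => X 0 ω = s0 ∧ X ℓ ω = t1) := by
  have hℓ' : (0 : ℝ) < ℓ := by exact_mod_cast hℓ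
  have hA0 : Aval p (fun ω' => X 0 ω' = s0) (X 0) s0 = 1 / 2 := by
    unfold Aval cprE
    simp only [and_self, h0]
    norm_num
  have hA1 : Aval p (fun ω' => X 0 ω' = s0) (X 0) s1 = -(1 / 2) := by
    have : prE p (fun ω => X 0 ω = s0 ∧ X 0 ω = s1) = 0 := by
      unfold prE
      refine Finset.sum_eq_zero fun ω _ => if_neg ?_
      rintro ⟨a, b⟩
      exact hs (a.symm.trans b)
    unfold Aval cprE
    rw [this]
    norm_num
  set q := prE p (fun ω => X 0 ω = s0 ∧ X ℓ ω = t1) with hq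
  have hB1 : Aval p (fun ω' => X 0 ω' = s0) (X ℓ) t1 = 2 * q - 1 / 2 := by
    unfold Aval cprE
    rw [hl1]
    ring
  have hq0 : prE p (fun ω => X 0 ω = s0 ∧ X ℓ ω = t0) = 1 / 2 - q := by
    rw [eq_sub_iff_add_eq, hq, ← h0]
    unfold prE
    rw [← Finset.sum_add_distrib]
    refine Finset.sum_congr rfl fun ω _ => ?_
    rcases hXl ω with h | h
    · simp [h, ht]
    · simp [h, ht.symm]
  have hB0 : Aval p (fun ω' => X 0 ω' = s0) (X ℓ) t0 = 1 / 2 - 2 * q := by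
    unfold Aval cprE
    rw [hl0, hq0]
    ring
  constructor
  · intro v hv0 hvl
    by_contra! hcon
    have key : ∀ i ≤ ℓ, 1 / 2 - i * (1 / (2 * (ℓ : ℝ)))
        ≤ Aval p (fun ω' => X 0 ω' = s0) (X i) (v i) := by
      intro i
      induction i with
      | zero => intro _; rw [hv0, hA0]; simp
      | succ k ih =>
        intro hk
        have h := ih (by omega)
        have hc := hcon k (by omega)
        rw [hC] at hc
        push Not at hc
        obtain ⟨hw, hc⟩ := hc
        have hw' := lt_of_le_of_ne (prE_nonneg_aux p hp _) (Ne.symm hw)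
        have := hc (hw'.trans_le (prE_mono_aux p hp _ _ fun ω h => h.1))
          (hw'.trans_le (prE_mono_aux p hp _ _ fun ω h => h.2))
        have := (abs_le.1 this).2
        push_cast
        linarith
    have := key ℓ le_rfl
    rw [hvl] at this
    have e : (ℓ : ℝ) * (1 / (2 * (ℓ : ℝ))) = 1 / 2 := by field_simp
    linarith
  · set φ : ℕ → ℝ := fun i =>
      ∑ ω, p ω * Aval p (fun ω' => X 0 ω' = s0) (X i) (X i ω) ^ 2 with hφ
    have hφ0 : φ 0 = 1 / 4 := by
      have : ∀ ω, p ω * Aval p (fun ω' => X 0 ω' = s0) (X 0) (X 0 ω) ^ 2 = p ω * (1 / 4) := by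
        intro ω
        rcases hX0 ω with h | h
        · rw [h, hA0]; norm_num
        · rw [h, hA1]; norm_num
      simp only [hφ, this, ← Finset.sum_mul, hsum, one_mul]
    have hφl : φ ℓ = (1 / 2 - 2 * q) ^ 2 := by
      have : ∀ ω, p ω * Aval p (fun ω' => X 0 ω' = s0) (X ℓ) (X ℓ ω) ^ 2
          = p ω * (1 / 2 - 2 * q) ^ 2 := by
        intro ω
        rcases hXl ω with h | h
        · rw [h, hB0]
        · rw [h, hB1]; ring
      simp only [hφ, this, ← Finset.sum_mul, hsum, one_mul]
    have hstep : ∀ i ∈ Finset.range ℓ, (∑ u : S i, ∑ v : S (i + 1),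
          (if C i u v then prE p (fun ω => X i ω = u ∧ X (i + 1) ω = v) else 0))
        ≤ 4 * (ℓ : ℝ) ^ 2 * (φ i - φ (i + 1)) := by
      intro i hi
      have hs := step_aux p hp (fun ω => X 0 ω = s0) (X i) (X (i + 1))
        (hci i (Finset.mem_range.1 hi) s0)
      have hf := fib2_aux p (fun _ => True) (X i) (X (i + 1))
        (fun u v => if C i u v then 1 else 0)
      simp only [true_and, if_true, mul_one, ite_mul, one_mul, zero_mul] at hf
      rw [hf]
      simp only [hφ]
      rw [← hs, Finset.mul_sum]
      refine Finset.sum_le_sum fun ω _ => ?_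
      have hpω := hp ω
      by_cases hc : C i (X i ω) (X (i + 1) ω)
      · rw [if_pos hc, mul_one]
        rcases (hC _ _ _).1 hc with hw | ⟨_, _, hgap⟩
        · have := le_prE_aux p hp
            (fun ω' => X i ω' = X i ω ∧ X (i + 1) ω' = X (i + 1) ω) ω ⟨rfl, rfl⟩
          have h0 : p ω = 0 := le_antisymm (this.trans_eq hw) hpω
          simp [h0]
        · set d := Aval p (fun ω' => X 0 ω' = s0) (X i) (X i ω)
            - Aval p (fun ω' => X 0 ω' = s0) (X (i + 1)) (X (i + 1) ω) with hd
          have h1 : 1 ≤ 2 * (ℓ : ℝ) * |d| := by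
            rw [div_lt_iff₀ (by positivity)] at hgap
            linarith
          have h2 : 1 ≤ 4 * (ℓ : ℝ) ^ 2 * d ^ 2 := by
            rw [← sq_abs d]
            nlinarith
          nlinarith
      · rw [if_neg hc, mul_zero]
        positivity
    refine (Finset.sum_le_sum hstep).trans ?_
    rw [← Finset.mul_sum, Finset.sum_range_sub', hφ0, hφl]
    nlinarith [mul_nonneg (sq_nonneg (ℓ : ℝ)) (sq_nonneg q)]
end
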